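/- Let k be a field of characteristic zero. There exist homogeneous SL₂-invariants A, B, C, D of binary sextics, of degrees 2, 4, 6, 10 respectively, which are algebraically independent over k and such that every homogeneous SL₂-invariant of even degree lies in the polynomial subring k[A,B,C,D]. In particular the even part of the invariant ring R = k[a,…,g]^{SL₂} is a polynomial ring in four variables of weights 2, 4, 6, 10. -/

import Mathlib

/-!
The proof compares dimensions, in the manner of Cayley and Sylvester.

*Upper bound.* Let `E` and `F` be the derivations of `k[a, …, g]` that generate the substitutions
`y ↦ y + t x` and `x ↦ x + t y`; the monomials are eigenvectors of `[E, F]`, with eigenvalue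
proportional to the weight, where `a, …, g` have the weights `3, 2, …, -3`. An invariant form `P` of
degree `n` is killed by `E` and `F`, hence has weight `0` and is killed by `E`: it lies in
`hwSpace k n`. The map `E F` is injective on forms of weight `-1` (`eq_zero_of_EF`), so `F` embeds
the forms of weight `-1` into a complement of `hwSpace k n` within those of weight `0`, and
`dim (hwSpace k n) ≤ N(n, 0) - N(n, -1)`, where `N(n, s)` is the number of monomials of degree `n`
and weight `s` (`finrank_hwSpace`).

*Counting.* The generating function `∑ (N(n, 0) - N(n, -1)) tⁿ` is the constant term in `w` of
`(1 - w) ∏ᵢ (1 - t wⁱ)⁻¹`, `|i| ≤ 3`. An explicit partial fraction decomposition in `w`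
(`partial_fractions`) gives the value `(1 + t¹⁵) / ((1 - t²)(1 - t⁴)(1 - t⁶)(1 - t¹⁰))`. In even
degree the bound is therefore the number of monomials of degree `n` in variables of degrees
`2, 4, 6, 10` (`card_expos`).

*Lower bound.* Explicit invariants of these degrees are built from transvectants (`sexticInv`).
Since unipotent matrices generate `SL₂`, their invariance reduces to polynomial identities for the
two one-parameter groups. Their Jacobian has a nonzero minor at `x⁶ + 6 x y⁵`, so they are
algebraically independent. Their monomials of degree `n` are then linearly independent elements of
`hwSpace k n`, and by the upper bound they span it (`hwSpace_le_span`).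
-/

open MvPolynomial

/-- The binary sextic `a x^6 + 6b x^5 y + 15c x^4 y^2 + 20d x^3 y^3 + 15e x^2 y^4 +
6f x y^5 + g y^6` with coefficient vector `v = (a,b,c,d,e,f,g)`. -/
noncomputable def sextic {A : Type*} [CommRing A] (v : Fin 7 → A) :
    MvPolynomial (Fin 2) A :=
  C (v 0) * X 0 ^ 6 + C (6 * v 1) * X 0 ^ 5 * X 1 + C (15 * v 2) * X 0 ^ 4 * X 1 ^ 2 +
    C (20 * v 3) * X 0 ^ 3 * X 1 ^ 3 + C (15 * v 4) * X 0 ^ 2 * X 1 ^ 4 +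
    C (6 * v 5) * X 0 * X 1 ^ 5 + C (v 6) * X 1 ^ 6

/-- The substituted form `F(x m₁₁ + y m₂₁, x m₁₂ + y m₂₂)`. -/
noncomputable def substAct {A : Type*} [CommRing A] (M : Matrix (Fin 2) (Fin 2) A)
    (F : MvPolynomial (Fin 2) A) : MvPolynomial (Fin 2) A :=
  aeval (fun i => C (M 0 i) * X 0 + C (M 1 i) * X 1) F

/-- `P ∈ k[a,…,g]` is SL₂-invariant: whenever `det M = 1` and `w` is the coefficient
vector of the substituted sextic, `P(w) = P(v)`. -/
def IsSL2Invariant {k : Type*} [CommRing k] (P : MvPolynomial (Fin 7) k) : Prop :=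
  ∀ M : Matrix (Fin 2) (Fin 2) k, M.det = 1 →
    ∀ v w : Fin 7 → k, sextic w = substAct M (sextic v) →
      eval w P = eval v P

/-! ### Partial fractions and the generating function of the weights -/

/-- Numerator (divided by `w`, and up to a factor in `t` only) of the part of
`(1 - w) ∏ᵢ (1 - t wⁱ)⁻¹`, `|i| ≤ 3`, with positive exponents of `w`. -/
def numPos {R : Type*} [CommRing R] (w t : R) : R :=
  (-1 + t - t ^ 2 + t ^ 3 - t ^ 4 + t ^ 5 - t ^ 6 + t ^ 7 - t ^ 8 + t ^ 9 - t ^ 10 + t ^ 11 - t ^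
      12 + t ^ 13 - t ^ 14) +
  (t - t ^ 2 - t ^ 5 + t ^ 6 - 2 * t ^ 7 + t ^ 8 - t ^ 9 - t ^ 12 + t ^ 13 - t ^ 14 + t ^ 15) * w +
  (t - 2 * t ^ 2 + 2 * t ^ 3 - 2 * t ^ 4 + t ^ 5 - t ^ 6 - t ^ 10 + t ^ 11 - t ^ 12 + t ^ 13 - t
      ^ 14 + t ^ 15) * w ^ 2 +
  (-t ^ 2 + t ^ 3 - t ^ 4 + t ^ 5 - t ^ 6 + t ^ 7 + t ^ 11 - t ^ 12 + 2 * t ^ 13 - 2 * t ^ 14 + 2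
      * t ^ 15 - t ^ 16) * w ^ 3 +
  (-t ^ 2 + t ^ 3 - t ^ 4 + t ^ 5 + t ^ 8 - t ^ 9 + 2 * t ^ 10 - t ^ 11 + t ^ 12 + t ^ 15 - t ^
      16) * w ^ 4 +
  (t ^ 3 - t ^ 4 + t ^ 5 - t ^ 6 + t ^ 7 - t ^ 8 + t ^ 9 - t ^ 10 + t ^ 11 - t ^ 12 + t ^ 13 - t
      ^ 14 + t ^ 15 - t ^ 16 + t ^ 17) * w ^ 5

/-- Numerator (divided by `w⁻¹`, up to a factor in `t` only, and written in the variable `w⁻¹`) of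
the part of
`(1 - w) ∏ᵢ (1 - t wⁱ)⁻¹`, `|i| ≤ 3`, with negative exponents of `w`. -/
def numNeg {R : Type*} [CommRing R] (w t : R) : R :=
  (t ^ 3 - t ^ 4 + 2 * t ^ 5 - 2 * t ^ 6 + 3 * t ^ 7 - 2 * t ^ 8 + 2 * t ^ 9 - t ^ 10 + t ^ 11) +
  (t ^ 2 - t ^ 3 + t ^ 4 + t ^ 7 - t ^ 8 + t ^ 9) * w +
  (t - t ^ 2 + t ^ 3 - t ^ 4 + t ^ 5 - t ^ 6 + t ^ 7 - 2 * t ^ 8 + 2 * t ^ 9 - 2 * t ^ 10 + t ^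
      11 - t ^ 12) * w ^ 2 +
  (-t ^ 6 + t ^ 7 - 2 * t ^ 8 + 2 * t ^ 9 - 3 * t ^ 10 + 2 * t ^ 11 - 2 * t ^ 12 + t ^ 13 - t ^
      14) * w ^ 3 +
  (-t ^ 2 - t ^ 17) * w ^ 4 +
  (t ^ 3 - t ^ 4 + t ^ 5 - t ^ 6 + t ^ 7 - t ^ 8 + t ^ 9 - t ^ 10 + t ^ 11 - t ^ 12 + t ^ 13 - t
      ^ 14 + t ^ 15 - t ^ 16 + t ^ 17) * w ^ 5

/-- The partial fraction decomposition, with respect to `w`, of the generating function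
`(1 - w) ∏ᵢ (1 - t wⁱ)⁻¹`, with denominators cleared; `u` stands for `w⁻¹`. -/
lemma partial_fractions {R : Type*} [CommRing R] (w u t : R) (h : w * u = 1) :
    (1 - w) * (1 + t) * (1 - t ^ 4) * (1 - t ^ 6) * (1 - t ^ 10) =
      (1 + t ^ 15) * ((1 - t * w) * (1 - t * w ^ 2) * (1 - t * w ^ 3)) *
          ((1 - t * u) * (1 - t * u ^ 2) * (1 - t * u ^ 3)) +
        (1 + t) * (w * numPos w t * ((1 - t * u) * (1 - t * u ^ 2) * (1 - t * u ^ 3)) +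
          u * numNeg u t * ((1 - t * w) * (1 - t * w ^ 2) * (1 - t * w ^ 3))) := by
  have h0 : w ^ 5 * 1 = w ^ 5 := by ring
  have h1 : w ^ 5 * u = w ^ 4 := by linear_combination w ^ 4 * h
  have h2 : w ^ 5 * u ^ 2 = w ^ 3 := by linear_combination u * h1 + w ^ 3 * h
  have h3 : w ^ 5 * u ^ 3 = w ^ 2 := by linear_combination u * h2 + w ^ 2 * h
  have h4 : w ^ 5 * u ^ 4 = w := by linear_combination u * h3 + w * h
  have h5 : w ^ 5 * u ^ 5 = 1 := by linear_combination u * h4 + h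
  have hw : w * (1 - t * u) = w - t := by linear_combination -t * h
  have hw2 : w ^ 2 * (1 - t * u ^ 2) = w ^ 2 - t := by linear_combination -t * (w * u + 1) * h
  have hw3 : w ^ 3 * (1 - t * u ^ 3) = w ^ 3 - t := by
    linear_combination -t * (w ^ 2 * u ^ 2 + w * u + 1) * h
  have hP : w ^ 6 * ((1 - t * u) * (1 - t * u ^ 2) * (1 - t * u ^ 3)) =
      (w - t) * (w ^ 2 - t) * (w ^ 3 - t) := by
    rw [← hw, ← hw2, ← hw3]; ring
  have hN : w ^ 5 * numNeg u t =
      (t ^ 3 - t ^ 4 + 2 * t ^ 5 - 2 * t ^ 6 + 3 * t ^ 7 - 2 * t ^ 8 + 2 * t ^ 9 - t ^ 10 + t ^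
      11) * w ^ 5 +
      (t ^ 2 - t ^ 3 + t ^ 4 + t ^ 7 - t ^ 8 + t ^ 9) * w ^ 4 +
      (t - t ^ 2 + t ^ 3 - t ^ 4 + t ^ 5 - t ^ 6 + t ^ 7 - 2 * t ^ 8 + 2 * t ^ 9 - 2 * t ^ 10 + t
      ^ 11 - t ^ 12) * w ^ 3 +
      (-t ^ 6 + t ^ 7 - 2 * t ^ 8 + 2 * t ^ 9 - 3 * t ^ 10 + 2 * t ^ 11 - 2 * t ^ 12 + t ^ 13 - t
      ^ 14) * w ^ 2 +
      (-t ^ 2 - t ^ 17) * w ^ 1 +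
      (t ^ 3 - t ^ 4 + t ^ 5 - t ^ 6 + t ^ 7 - t ^ 8 + t ^ 9 - t ^ 10 + t ^ 11 - t ^ 12 + t ^ 13
      - t ^ 14 + t ^ 15 - t ^ 16 + t ^ 17) * w ^ 0 := by
    unfold numNeg
    linear_combination
      (t ^ 3 - t ^ 4 + 2 * t ^ 5 - 2 * t ^ 6 + 3 * t ^ 7 - 2 * t ^ 8 + 2 * t ^ 9 - t ^ 10 + t ^
      11) * h0 +
      (t ^ 2 - t ^ 3 + t ^ 4 + t ^ 7 - t ^ 8 + t ^ 9) * h1 +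
      (t - t ^ 2 + t ^ 3 - t ^ 4 + t ^ 5 - t ^ 6 + t ^ 7 - 2 * t ^ 8 + 2 * t ^ 9 - 2 * t ^ 10 + t
      ^ 11 - t ^ 12) * h2 +
      (-t ^ 6 + t ^ 7 - 2 * t ^ 8 + 2 * t ^ 9 - 3 * t ^ 10 + 2 * t ^ 11 - 2 * t ^ 12 + t ^ 13 - t
      ^ 14) * h3 +
      (-t ^ 2 - t ^ 17) * h4 +
      (t ^ 3 - t ^ 4 + t ^ 5 - t ^ 6 + t ^ 7 - t ^ 8 + t ^ 9 - t ^ 10 + t ^ 11 - t ^ 12 + t ^ 13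
      - t ^ 14 + t ^ 15 - t ^ 16 + t ^ 17) * h5
  have hN' : w ^ 6 * (u * numNeg u t) = w ^ 5 * numNeg u t := by
    linear_combination w ^ 5 * numNeg u t * h
  have hu : IsUnit (w ^ 6) := (IsUnit.of_mul_eq_one _ h).pow 6
  refine hu.mul_left_cancel ?_
  rw [hN] at hN'
  have expand : ∀ a b c P Q N : R, w ^ 6 * (a * P * Q + b * (c * Q + N * P)) =
      a * P * (w ^ 6 * Q) + b * (c * (w ^ 6 * Q) + w ^ 6 * N * P) := by intros; ring
  rw [expand, hP, hN', numPos]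
  ring

lemma map_numPos {R S : Type*} [CommRing R] [CommRing S] (f : R →+* S) (w t : R) :
    f (numPos w t) = numPos (f w) (f t) := by
  simp [numPos, map_ofNat f]

lemma map_numNeg {R S : Type*} [CommRing R] [CommRing S] (f : R →+* S) (w t : R) :
    f (numNeg w t) = numNeg (f w) (f t) := by
  simp [numNeg, map_ofNat f]

/-- The geometric series `∑ aⁿ tⁿ`. -/
def geo {R : Type*} [CommRing R] (a : R) : PowerSeries R := PowerSeries.mk fun n => a ^ n

lemma geo_mul {R : Type*} [CommRing R] (a : R) :
    geo a * (1 - PowerSeries.X * PowerSeries.C a) = 1 := by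
  ext n
  rcases n with _ | n
  · simp [geo]
  · rw [mul_sub, mul_one, mul_comm PowerSeries.X, ← mul_assoc, map_sub,
      PowerSeries.coeff_succ_mul_X, PowerSeries.coeff_mul_C]
    simp [geo, pow_succ, PowerSeries.coeff_one]

lemma map_geo {R S : Type*} [CommRing R] [CommRing S] (f : R →+* S) (a : R) :
    PowerSeries.map f (geo a) = geo (f a) := by
  ext n; simp [geo]

open LaurentPolynomial in
/-- The coefficientwise constant term, as a map from power series over `ℤ[w, w⁻¹]` to power series
over `ℤ`. -/
noncomputable def constTerm (F : PowerSeries ℤ[T;T⁻¹]) : PowerSeries ℤ :=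
  PowerSeries.mk fun n => (PowerSeries.coeff n F).coeff 0

open LaurentPolynomial in
lemma constTerm_add (F G : PowerSeries ℤ[T;T⁻¹]) :
    constTerm (F + G) = constTerm F + constTerm G := by
  ext n; simp [constTerm]

open LaurentPolynomial in
lemma constTerm_map_mul (D : PowerSeries ℤ) (F : PowerSeries ℤ[T;T⁻¹]) :
    constTerm (PowerSeries.map LaurentPolynomial.C D * F) = D * constTerm F := by
  ext n
  have h (a : ℤ) (f : ℤ[T;T⁻¹]) : (LaurentPolynomial.C a * f).coeff 0 = a * f.coeff 0 := by
    rw [← LaurentPolynomial.smul_eq_C_mul, AddMonoidAlgebra.coeff_smul, Finsupp.smul_apply,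
      smul_eq_mul]
  simp only [constTerm, PowerSeries.coeff_mul, PowerSeries.coeff_mk, PowerSeries.coeff_map,
    AddMonoidAlgebra.coeff_sum, Finsupp.finsetSum_apply, h]

lemma coeff_zero_toLaurent_X_mul (p : Polynomial ℤ) :
    (Polynomial.toLaurent (Polynomial.X * p)).coeff 0 = 0 := by
  induction p using Polynomial.induction_on' with
  | add p q hp hq => rw [mul_add, map_add, AddMonoidAlgebra.coeff_add, Finsupp.add_apply, hp, hq,
      add_zero]
  | monomial n a =>
    rw [Polynomial.X_mul_monomial, ← Polynomial.C_mul_X_pow_eq_monomial,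
      Polynomial.toLaurent_C_mul_X_pow, ← LaurentPolynomial.smul_eq_C_mul,
      AddMonoidAlgebra.coeff_smul, Finsupp.smul_apply, LaurentPolynomial.T_apply,
      if_neg (by omega), smul_zero]

lemma constTerm_pos (F : PowerSeries (Polynomial ℤ)) :
    constTerm (PowerSeries.map Polynomial.toLaurent (PowerSeries.C Polynomial.X * F)) = 0 := by
  ext n
  simp only [constTerm, PowerSeries.coeff_mk, PowerSeries.coeff_map, PowerSeries.coeff_C_mul,
    coeff_zero_toLaurent_X_mul, map_zero]

/-- The embedding `ℤ[w] → ℤ[w, w⁻¹]` sending `w` to `w⁻¹`. -/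
noncomputable def toLaurentInv : Polynomial ℤ →+* LaurentPolynomial ℤ :=
  (LaurentPolynomial.invert (R := ℤ) : LaurentPolynomial ℤ →+* LaurentPolynomial ℤ).comp
    Polynomial.toLaurent

lemma toLaurentInv_X : toLaurentInv Polynomial.X = LaurentPolynomial.T (-1) := by
  simp [toLaurentInv]

lemma constTerm_neg (F : PowerSeries (Polynomial ℤ)) :
    constTerm (PowerSeries.map toLaurentInv (PowerSeries.C Polynomial.X * F)) = 0 := by
  rw [← constTerm_pos F]
  ext n
  simp only [constTerm, PowerSeries.coeff_mk, PowerSeries.coeff_map, toLaurentInv,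
    RingHom.comp_apply, RingHom.coe_coe, LaurentPolynomial.invert_apply, neg_zero]

open LaurentPolynomial in
/-- The generating function `∏ᵢ (1 - t wⁱ)⁻¹`, `|i| ≤ 3`, of the monomials in `a, …, g`, where `t`
records the degree and `w` the weight. -/
noncomputable def genFun : PowerSeries ℤ[T;T⁻¹] :=
  ∏ i : Fin 7, geo (T (3 - (i : ℤ)))

/-- The exponent vectors of degree `n` and weight `s`, where `a, …, g` have the weights
`3, 2, 1, 0, -1, -2, -3`. -/
def expos (n : ℕ) (s : ℤ) : Finset (Fin 7 →₀ ℕ) :=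
  (Finset.finsuppAntidiag Finset.univ n).filter fun l => ∑ i, (l i : ℤ) * (3 - (i : ℤ)) = s

open LaurentPolynomial in
lemma coeff_genFun (n : ℕ) (s : ℤ) :
    (PowerSeries.coeff n genFun).coeff s = (expos n s).card := by
  rw [genFun, PowerSeries.coeff_prod, AddMonoidAlgebra.coeff_sum, Finsupp.finsetSum_apply,
    expos, Finset.card_filter]
  push_cast
  refine Finset.sum_congr rfl fun l _ => ?_
  have (u : Finset (Fin 7)) (f : Fin 7 → ℤ) : ∏ i ∈ u, (T (f i) : ℤ[T;T⁻¹]) = T (∑ i ∈ u, f i) := by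
    induction u using Finset.induction_on with
    | empty => simp
    | insert a u ha ih => rw [Finset.prod_insert ha, Finset.sum_insert ha, ih, T_add]
  simp only [geo, PowerSeries.coeff_mk, T_pow, this, T_apply]

/-- The exponent vectors of the monomials of degree `n` in variables of degrees `2, 4, 6, 10`,
each entry being multiplied by the degree of the variable. -/
def invExpos (n : ℕ) : Finset (Fin 4 →₀ ℕ) :=
  (Finset.finsuppAntidiag Finset.univ n).filter fun l => ∀ i, ![2, 4, 6, 10] i ∣ l i

/-- The power series `(1 - t^d)⁻¹`. -/
def geoPow (d : ℕ) : PowerSeries ℤ := PowerSeries.mk fun n => if d ∣ n then 1 else 0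

lemma geoPow_mul (d : ℕ) (hd : 0 < d) : geoPow d * (1 - PowerSeries.X ^ d) = 1 := by
  ext n
  rw [mul_sub, mul_one, map_sub, PowerSeries.coeff_mul_X_pow', PowerSeries.coeff_one]
  simp only [geoPow, PowerSeries.coeff_mk]
  by_cases h : d ≤ n
  · have : d ∣ n - d ↔ d ∣ n := by
      rw [Nat.dvd_sub_iff_left h dvd_rfl]
    have hn : n ≠ 0 := by omega
    simp [this, h, hn]
  · rcases n with _ | n
    · simp [hd.ne']
    · have : ¬ d ∣ n + 1 := fun h' => h (Nat.le_of_dvd (by omega) h')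
      simp [h, this]

/-- The Hilbert series of a polynomial ring with generators of degrees `2, 4, 6, 10`. -/
noncomputable def hilb : PowerSeries ℤ := ∏ i : Fin 4, geoPow (![2, 4, 6, 10] i)

lemma coeff_hilb (n : ℕ) : PowerSeries.coeff n hilb = (invExpos n).card := by
  rw [hilb, PowerSeries.coeff_prod, invExpos, Finset.card_filter]
  push_cast
  refine Finset.sum_congr rfl fun l _ => ?_
  simp only [geoPow, PowerSeries.coeff_mk]
  rw [Finset.prod_ite_zero]
  simp

lemma hilb_odd (n : ℕ) (hn : ¬ Even n) : PowerSeries.coeff n hilb = 0 := by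
  rw [coeff_hilb, Nat.cast_eq_zero, Finset.card_eq_zero, invExpos, Finset.filter_eq_empty_iff]
  intro l hl h
  rw [Finset.mem_finsuppAntidiag] at hl
  apply hn
  rw [← hl.1]
  simp only [Fin.sum_univ_four, Fin.forall_fin_succ] at h ⊢
  simp at h
  rw [even_iff_two_dvd]
  omega

lemma hilb_mul : hilb * ((1 - PowerSeries.X ^ 2) * (1 - PowerSeries.X ^ 4) *
    (1 - PowerSeries.X ^ 6) * (1 - PowerSeries.X ^ 10)) = 1 := by
  have h2 := geoPow_mul 2 (by norm_num)
  have h4 := geoPow_mul 4 (by norm_num)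
  have h6 := geoPow_mul 6 (by norm_num)
  have h10 := geoPow_mul 10 (by norm_num)
  simp only [hilb, Fin.prod_univ_four]
  calc _ = (geoPow 2 * (1 - PowerSeries.X ^ 2)) * (geoPow 4 * (1 - PowerSeries.X ^ 4)) *
        (geoPow 6 * (1 - PowerSeries.X ^ 6)) * (geoPow 10 * (1 - PowerSeries.X ^ 10)) := by
        simp; ring
    _ = 1 := by rw [h2, h4, h6, h10]; simp

/-- The Cayley-Sylvester formula for the sextic. The partial fraction decomposition splits the
generating function into a part free of `w`, a part with positive and a part with negative exponents
of `w`, and only the first one contributes to the constant term. -/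
lemma constTerm_genFun :
    constTerm ((1 - PowerSeries.C (LaurentPolynomial.T 1)) * genFun) =
      (1 + PowerSeries.X ^ 15) * hilb := by
  set w : PowerSeries (LaurentPolynomial ℤ) := PowerSeries.C (LaurentPolynomial.T 1) with hw
  set u : PowerSeries (LaurentPolynomial ℤ) := PowerSeries.C (LaurentPolynomial.T (-1)) with hu
  have hwu : w * u = 1 := by
    rw [hw, hu, ← map_mul, ← LaurentPolynomial.T_add]; simp
  have g (m : ℤ) := geo_mul (LaurentPolynomial.T m : LaurentPolynomial ℤ)
  have wp (j : ℕ) : PowerSeries.C (LaurentPolynomial.T j : LaurentPolynomial ℤ) = w ^ j := by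
    rw [hw, ← map_pow, LaurentPolynomial.T_pow, mul_one]
  have up (j : ℕ) : PowerSeries.C (LaurentPolynomial.T (-j) : LaurentPolynomial ℤ) = u ^ j := by
    rw [hu, ← map_pow, LaurentPolynomial.T_pow, mul_neg_one]
  have g3 := g 3
  have g2 := g 2
  have g1 := g 1
  have g0 := g 0
  have k3 := g (-3)
  have k2 := g (-2)
  have k1 := g (-1)
  have w3 := wp 3
  have w2 := wp 2
  have u3 := up 3
  have u2 := up 2
  push_cast at w3 w2 u3 u2
  rw [w3] at g3
  rw [w2] at g2
  rw [u3] at k3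
  rw [u2] at k2
  rw [← hw] at g1
  rw [← hu] at k1
  have t0 : PowerSeries.C (LaurentPolynomial.T 0 : LaurentPolynomial ℤ) = 1 := by
    rw [LaurentPolynomial.T_zero, map_one]
  rw [t0, mul_one] at g0
  have hgen : genFun = geo (LaurentPolynomial.T 0) *
      (geo (LaurentPolynomial.T 1) * geo (LaurentPolynomial.T 2) * geo (LaurentPolynomial.T 3)) *
      (geo (LaurentPolynomial.T (-1)) * geo (LaurentPolynomial.T (-2)) *
        geo (LaurentPolynomial.T (-3))) := by
    simp only [genFun, Fin.prod_univ_seven]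
    norm_num
    ring
  have hpos : constTerm (w * numPos w PowerSeries.X * (geo (LaurentPolynomial.T 1) *
      geo (LaurentPolynomial.T 2) * geo (LaurentPolynomial.T 3))) = 0 := by
    rw [← constTerm_pos (numPos (PowerSeries.C Polynomial.X) PowerSeries.X *
      (geo Polynomial.X * geo (Polynomial.X ^ 2) * geo (Polynomial.X ^ 3)))]
    simp only [map_mul, map_geo, map_numPos, PowerSeries.map_C, PowerSeries.map_X, map_pow,
      Polynomial.toLaurent_X, LaurentPolynomial.T_pow, ← hw]
    norm_num [mul_assoc]
  have hneg : constTerm (u * numNeg u PowerSeries.X * (geo (LaurentPolynomial.T (-1)) *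
      geo (LaurentPolynomial.T (-2)) * geo (LaurentPolynomial.T (-3)))) = 0 := by
    rw [← constTerm_neg (numNeg (PowerSeries.C Polynomial.X) PowerSeries.X *
      (geo Polynomial.X * geo (Polynomial.X ^ 2) * geo (Polynomial.X ^ 3)))]
    simp only [map_mul, map_geo, map_numNeg, PowerSeries.map_C, PowerSeries.map_X, map_pow,
      toLaurentInv_X, LaurentPolynomial.T_pow, ← hu]
    norm_num [mul_assoc]
  -- The `w`-free factor `(1 - t²)(1 - t⁴)(1 - t⁶)(1 - t¹⁰)` clears the remaining denominators.
  have key : PowerSeries.map LaurentPolynomial.C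
      ((1 - PowerSeries.X ^ 2) * (1 - PowerSeries.X ^ 4) *
        (1 - PowerSeries.X ^ 6) * (1 - PowerSeries.X ^ 10)) * ((1 - w) * genFun) =
      PowerSeries.map LaurentPolynomial.C (1 + PowerSeries.X ^ 15) * 1 +
      PowerSeries.map LaurentPolynomial.C (1 + PowerSeries.X) *
        (w * numPos w PowerSeries.X * (geo (LaurentPolynomial.T 1) *
      geo (LaurentPolynomial.T 2) * geo (LaurentPolynomial.T 3)) +
      u * numNeg u PowerSeries.X * (geo (LaurentPolynomial.T (-1)) *
      geo (LaurentPolynomial.T (-2)) * geo (LaurentPolynomial.T (-3)))) := by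
    have hpf := partial_fractions w u PowerSeries.X hwu
    simp only [map_mul, map_sub, map_add, map_one, map_pow, PowerSeries.map_X, hgen]
    generalize numPos w PowerSeries.X = np at *
    generalize numNeg u PowerSeries.X = nn at *
    generalize geo (LaurentPolynomial.T 0 : LaurentPolynomial ℤ) = a0 at *
    generalize geo (LaurentPolynomial.T 1 : LaurentPolynomial ℤ) = a1 at *
    generalize geo (LaurentPolynomial.T 2 : LaurentPolynomial ℤ) = a2 at *
    generalize geo (LaurentPolynomial.T 3 : LaurentPolynomial ℤ) = a3 at *
    generalize geo (LaurentPolynomial.T (-1) : LaurentPolynomial ℤ) = b1 at *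
    generalize geo (LaurentPolynomial.T (-2) : LaurentPolynomial ℤ) = b2 at *
    generalize geo (LaurentPolynomial.T (-3) : LaurentPolynomial ℤ) = b3 at *
    generalize (PowerSeries.X : PowerSeries (LaurentPolynomial ℤ)) = t at *
    have gp : (a1 * a2 * a3) * ((1 - t * w) * (1 - t * w ^ 2) * (1 - t * w ^ 3)) = 1 := by
      calc _ = (a1 * (1 - t * w)) * (a2 * (1 - t * w ^ 2)) * (a3 * (1 - t * w ^ 3)) := by ring
        _ = 1 := by rw [g1, g2, g3]; ring
    have gm : (b1 * b2 * b3) * ((1 - t * u) * (1 - t * u ^ 2) * (1 - t * u ^ 3)) = 1 := by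
      calc _ = (b1 * (1 - t * u)) * (b2 * (1 - t * u ^ 2)) * (b3 * (1 - t * u ^ 3)) := by ring
        _ = 1 := by rw [k1, k2, k3]; ring
    generalize (1 - t * w) * (1 - t * w ^ 2) * (1 - t * w ^ 3) = pp at *
    generalize (1 - t * u) * (1 - t * u ^ 2) * (1 - t * u ^ 3) = pm at *
    generalize a1 * a2 * a3 = gp' at *
    generalize b1 * b2 * b3 = gm' at *
    calc _ = (a0 * (1 - t)) * ((1 - w) * (1 + t) * (1 - t ^ 4) * (1 - t ^ 6) * (1 - t ^ 10)) *
          gp' * gm' := by ring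
      _ = (1 + t ^ 15) * (gp' * pp) * (gm' * pm) + (1 + t) * (w * np * gp' * (gm' * pm) +
          u * nn * gm' * (gp' * pp)) := by rw [g0, hpf]; ring
      _ = _ := by rw [gp, gm]; ring
  have h1 : constTerm 1 = 1 := by
    ext n
    simp only [constTerm, PowerSeries.coeff_mk, PowerSeries.coeff_one]
    split_ifs
    · rw [← LaurentPolynomial.T_zero, LaurentPolynomial.T_apply, if_pos rfl]
    · simp
  have key2 := congrArg constTerm key
  rw [constTerm_map_mul, constTerm_add, constTerm_map_mul, constTerm_map_mul, constTerm_add, hpos,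
    hneg, h1] at key2
  linear_combination hilb * key2 - constTerm ((1 - w) * genFun) * hilb_mul

/-- In even degree `n`, the number of monomials in variables of degrees `2, 4, 6, 10` is the
difference between the numbers of monomials in `a, …, g` of weight `0` and of weight `-1`. -/
lemma card_expos (n : ℕ) (hn : Even n) :
    (expos n 0).card = (expos n (-1)).card + (invExpos n).card := by
  have h := congrArg (PowerSeries.coeff n) constTerm_genFun
  -- The summand `t¹⁵ / ((1 - t²)(1 - t⁴)(1 - t⁶)(1 - t¹⁰))` is an odd power series.
  have h15 : PowerSeries.coeff n (PowerSeries.X ^ 15 * hilb) = 0 := by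
    rw [PowerSeries.coeff_X_pow_mul']
    split_ifs with h'
    · apply hilb_odd
      intro h2
      rw [Nat.even_sub h'] at h2
      have : Even 15 := h2.mp hn
      revert this
      decide
    · rfl
  rw [add_mul, one_mul, map_add, h15, add_zero, coeff_hilb] at h
  have hs (f : LaurentPolynomial ℤ) : ((1 - LaurentPolynomial.T 1) * f).coeff 0 =
      f.coeff 0 - f.coeff (-1) := by
    rw [sub_mul, one_mul]
    have : (LaurentPolynomial.T 1 * f).coeff 0 = f.coeff (-1) := by
      rw [LaurentPolynomial.T, AddMonoidAlgebra.coeff_single_mul_eq_mul_coeff (m₂ := -1), one_mul]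
      intro m _
      omega
    rw [AddMonoidAlgebra.coeff_sub, Finsupp.sub_apply, this]
  have hC : (1 - PowerSeries.C (LaurentPolynomial.T 1) : PowerSeries (LaurentPolynomial ℤ)) =
      PowerSeries.C (1 - LaurentPolynomial.T 1) := by simp
  rw [hC, constTerm, PowerSeries.coeff_mk, PowerSeries.coeff_C_mul, hs, coeff_genFun,
    coeff_genFun] at h
  omega

/-! ### The action of the Lie algebra `sl₂` -/

/-- The diagonal derivation `∑ cᵢ Xᵢ ∂/∂Xᵢ`. -/
noncomputable def diagDer {k : Type*} [Field k] (c : Fin 7 → ℤ) :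
    Derivation k (MvPolynomial (Fin 7) k) (MvPolynomial (Fin 7) k) :=
  mkDerivation k fun i => (c i : MvPolynomial (Fin 7) k) * X i

lemma diagDer_monomial {k : Type*} [Field k] (c : Fin 7 → ℤ) (m : Fin 7 →₀ ℕ) (a : k) :
    diagDer c (monomial m a) = ((∑ i, (m i : ℤ) * c i : ℤ) : k) • monomial m a := by
  have h (i : Fin 7) : monomial (m - Finsupp.single i 1) (m i : k) *
      ((c i : MvPolynomial (Fin 7) k) * X i) = (((m i : ℤ) * c i : ℤ) : k) • monomial m 1 := by
    rcases Nat.eq_zero_or_pos (m i) with h0 | h0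
    · simp [h0]
    · have hm : m - Finsupp.single i 1 + Finsupp.single i 1 = m :=
        tsub_add_cancel_of_le (Finsupp.single_le_iff.mpr h0)
      have hc : (c i : MvPolynomial (Fin 7) k) = C (c i : k) := by simp
      rw [hc, X, C_mul_monomial, monomial_mul, hm, smul_monomial]
      simp
  rw [diagDer, mkDerivation_monomial, Finsupp.sum_fintype _ _ (by simp)]
  simp only [smul_eq_mul, h]
  rw [← Finset.sum_smul, smul_comm, smul_monomial, smul_eq_mul, mul_one]
  push_cast
  rfl

lemma coeff_diagDer {k : Type*} [Field k] (c : Fin 7 → ℤ) (P : MvPolynomial (Fin 7) k)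
    (m : Fin 7 →₀ ℕ) : coeff m (diagDer c P) = ((∑ i, (m i : ℤ) * c i : ℤ) : k) * coeff m P := by
  classical
  induction P using MvPolynomial.induction_on' with
  | monomial l a =>
    rw [diagDer_monomial, coeff_smul, coeff_monomial, smul_eq_mul]
    split_ifs with h
    · rw [h]
    · simp
  | add p q hp hq => rw [map_add, coeff_add, coeff_add, hp, hq, mul_add]

/-- The weight derivation: monomials of weight `s` are eigenvectors with eigenvalue `s`. -/
noncomputable def wtDer {k : Type*} [Field k] :
    Derivation k (MvPolynomial (Fin 7) k) (MvPolynomial (Fin 7) k) :=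
  diagDer fun i => 3 - (i : ℤ)

/-- The Euler derivation, which multiplies forms of degree `n` by `n`. -/
noncomputable def degDer {k : Type*} [Field k] :
    Derivation k (MvPolynomial (Fin 7) k) (MvPolynomial (Fin 7) k) :=
  diagDer fun _ => 1

/-- The infinitesimal generator of the substitutions `y ↦ y + t x`. -/
noncomputable def derE {k : Type*} [Field k] :
    Derivation k (MvPolynomial (Fin 7) k) (MvPolynomial (Fin 7) k) :=
  mkDerivation k ![6 * X 1, 5 * X 2, 4 * X 3, 3 * X 4, 2 * X 5, X 6, 0]

/-- The infinitesimal generator of the substitutions `x ↦ x + t y`. -/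
noncomputable def derF {k : Type*} [Field k] :
    Derivation k (MvPolynomial (Fin 7) k) (MvPolynomial (Fin 7) k) :=
  mkDerivation k ![0, X 0, 2 * X 1, 3 * X 2, 4 * X 3, 5 * X 4, 6 * X 5]

section Commutators

variable {k : Type*} [Field k]

lemma der_ofNat (D : Derivation k (MvPolynomial (Fin 7) k) (MvPolynomial (Fin 7) k)) (n : ℕ)
    [n.AtLeastTwo] : D (ofNat(n) : MvPolynomial (Fin 7) k) = 0 :=
  D.map_natCast n

lemma der_int (D : Derivation k (MvPolynomial (Fin 7) k) (MvPolynomial (Fin 7) k)) (n : ℤ) :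
    D (n : MvPolynomial (Fin 7) k) = 0 := by
  simp

lemma comm_EF : ⁅derE (k := k), derF (k := k)⁆ = (-2 : k) • wtDer (k := k) := by
  refine derivation_ext fun i => ?_
  rw [Derivation.commutator_apply]
  fin_cases i <;>
    simp [derE, derF, wtDer, diagDer, mkDerivation_X, Derivation.leibniz, der_ofNat,
      smul_eq_C_mul, map_ofNat] <;> ring

lemma comm_wtE : ⁅wtDer (k := k), derE (k := k)⁆ = -derE (k := k) := by
  refine derivation_ext fun i => ?_
  rw [Derivation.commutator_apply]
  fin_cases i <;>
    simp [derE, wtDer, diagDer, mkDerivation_X, Derivation.leibniz, der_ofNat] <;> ring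

lemma comm_wtF : ⁅wtDer (k := k), derF (k := k)⁆ = derF (k := k) := by
  refine derivation_ext fun i => ?_
  rw [Derivation.commutator_apply]
  fin_cases i <;>
    simp [derF, wtDer, diagDer, mkDerivation_X, Derivation.leibniz, der_ofNat,
      -mul_eq_mul_left_iff] <;> ring_nf

lemma comm_degE : ⁅degDer (k := k), derE (k := k)⁆ = 0 := by
  refine derivation_ext fun i => ?_
  rw [Derivation.commutator_apply]
  fin_cases i <;>
    simp [derE, degDer, diagDer, mkDerivation_X, Derivation.leibniz, der_ofNat]

lemma comm_degF : ⁅degDer (k := k), derF (k := k)⁆ = 0 := by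
  refine derivation_ext fun i => ?_
  rw [Derivation.commutator_apply]
  fin_cases i <;>
    simp [derF, degDer, diagDer, mkDerivation_X, Derivation.leibniz, der_ofNat]

/-- The forms of degree `n` and weight `s`. -/
noncomputable def wtSpace (k : Type*) [Field k] (n : ℕ) (s : ℤ) :
    Submodule k (MvPolynomial (Fin 7) k) :=
  restrictSupport k (expos n s : Set (Fin 7 →₀ ℕ))

instance (n : ℕ) (s : ℤ) : FiniteDimensional k (wtSpace k n s) :=
  Module.Finite.of_basis (basisRestrictSupport k _)

lemma finrank_wtSpace (n : ℕ) (s : ℤ) :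
    Module.finrank k (wtSpace k n s) = (expos n s).card := by
  rw [wtSpace, Module.finrank_eq_card_basis (basisRestrictSupport k _)]
  simp

lemma diagDer_eq_smul_iff [CharZero k] (c : Fin 7 → ℤ) (z : ℤ) (P : MvPolynomial (Fin 7) k) :
    diagDer c P = (z : k) • P ↔ ∀ m ∈ P.support, ∑ i, (m i : ℤ) * c i = z := by
  simp only [MvPolynomial.ext_iff, coeff_diagDer, coeff_smul, smul_eq_mul, mem_support_iff]
  refine forall_congr' fun m => ?_
  by_cases h : coeff m P = 0
  · simp [h]
  · rw [mul_left_inj' h, Int.cast_inj]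
    simp [h]

lemma degDer_eq_smul_iff [CharZero k] (n : ℕ) (P : MvPolynomial (Fin 7) k) :
    degDer P = (n : k) • P ↔ P.IsHomogeneous n := by
  have h := diagDer_eq_smul_iff (fun _ => 1) n P
  rw [Int.cast_natCast] at h
  rw [degDer, h]
  refine forall_congr' fun m => ?_
  have hm : Finsupp.weight (1 : Fin 7 → ℕ) m = ∑ i, m i := by
    rw [← Finsupp.degree_eq_sum, Finsupp.degree_eq_weight_one]; rfl
  rw [mem_support_iff, hm]
  simp only [mul_one]
  rw [← Nat.cast_sum, Nat.cast_inj]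

lemma mem_wtSpace [CharZero k] {n : ℕ} {s : ℤ} {P : MvPolynomial (Fin 7) k} :
    P ∈ wtSpace k n s ↔ degDer P = (n : k) • P ∧ wtDer P = (s : k) • P := by
  have h1 := diagDer_eq_smul_iff (fun _ => 1) n P
  have h2 := diagDer_eq_smul_iff (fun i => 3 - (i : ℤ)) s P
  rw [Int.cast_natCast] at h1
  rw [degDer, wtDer, h1, h2, wtSpace, mem_restrictSupport_iff]
  simp only [Set.subset_def, Finset.mem_coe, ← forall_and]
  refine forall₂_congr fun m _ => ?_
  simp only [expos, Finset.mem_filter, Finset.mem_finsuppAntidiag, Finset.subset_univ, and_true,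
    mul_one]
  rw [← Nat.cast_sum, Nat.cast_inj]

lemma derE_mem [CharZero k] {n : ℕ} {s : ℤ} {P : MvPolynomial (Fin 7) k}
    (h : P ∈ wtSpace k n s) : derE P ∈ wtSpace k n (s - 1) := by
  rw [mem_wtSpace] at h ⊢
  have h1 := DFunLike.congr_fun (comm_degE (k := k)) P
  have h2 := DFunLike.congr_fun (comm_wtE (k := k)) P
  rw [Derivation.commutator_apply, h.1, Derivation.map_smul,
    Derivation.zero_apply, sub_eq_zero] at h1
  rw [Derivation.commutator_apply, h.2, Derivation.map_smul,
    Derivation.neg_apply, sub_eq_iff_eq_add] at h2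
  refine ⟨h1, ?_⟩
  rw [h2]; push_cast; module

lemma derF_mem [CharZero k] {n : ℕ} {s : ℤ} {P : MvPolynomial (Fin 7) k}
    (h : P ∈ wtSpace k n s) : derF P ∈ wtSpace k n (s + 1) := by
  rw [mem_wtSpace] at h ⊢
  have h1 := DFunLike.congr_fun (comm_degF (k := k)) P
  have h2 := DFunLike.congr_fun (comm_wtF (k := k)) P
  rw [Derivation.commutator_apply, h.1, Derivation.map_smul,
    Derivation.zero_apply, sub_eq_zero] at h1
  rw [Derivation.commutator_apply, h.2, Derivation.map_smul, sub_eq_iff_eq_add] at h2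
  refine ⟨h1, ?_⟩
  rw [h2]; push_cast; module

lemma wtSpace_eq_zero {n : ℕ} {s : ℤ} (hs : s < -(3 * n)) {P : MvPolynomial (Fin 7) k}
    (h : P ∈ wtSpace k n s) : P = 0 := by
  rw [wtSpace, mem_restrictSupport_iff] at h
  rw [← support_eq_empty, Finset.eq_empty_iff_forall_notMem]
  intro m hm
  have := h hm
  simp only [expos, Finset.coe_filter, Set.mem_ofPred_eq, Finset.mem_finsuppAntidiag,
    Fin.sum_univ_seven] at this
  obtain ⟨⟨h1, -⟩, h2⟩ := this
  simp at h2
  omega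

/-- A vector of weight `-s < 0` on which `F E` acts by a negative scalar vanishes: applying `E`
gives such a vector of smaller weight, and the weights are bounded below. -/
lemma eq_zero_of_FE [CharZero k] (n : ℕ) (N : ℕ) : ∀ (s c : ℕ), 3 * n < s + N → 0 < c →
    ∀ P ∈ wtSpace k n (-(s : ℤ)), derF (derE P) = -(c : k) • P → P = 0 := by
  induction N with
  | zero => exact fun s c hs _ P hP _ => wtSpace_eq_zero (by omega) hP
  | succ N ih =>
    intro s c hs hc P hP h
    have hE := derE_mem hP
    have hz : derE P = 0 := by
      refine ih (s + 1) (c + 2 * (s + 1)) (by omega) (by omega) (derE P) ?_ ?_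
      · convert hE using 1; push_cast; ring_nf
      · have h1 := DFunLike.congr_fun (comm_EF (k := k)) (derE P)
        rw [Derivation.commutator_apply, h, Derivation.map_smul, Derivation.smul_apply,
          (mem_wtSpace.mp hE).2] at h1
        rw [sub_eq_iff_eq_add', ← sub_eq_iff_eq_add] at h1
        rw [← h1]
        push_cast
        module
    rw [hz, map_zero] at h
    have hcs : -(c : k) ≠ 0 := by simpa using hc.ne'
    exact (smul_eq_zero.mp h.symm).resolve_left hcs

/-- `E F` is injective on forms of weight `-1`. -/
lemma eq_zero_of_EF [CharZero k] {n : ℕ} {P : MvPolynomial (Fin 7) k} (hP : P ∈ wtSpace k n (-1))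
    (h : derE (derF P) = 0) : P = 0 := by
  refine eq_zero_of_FE n (3 * n) 1 2 (by omega) (by omega) P hP ?_
  have h1 := DFunLike.congr_fun (comm_EF (k := k)) P
  rw [Derivation.commutator_apply, h, Derivation.smul_apply, (mem_wtSpace.mp hP).2] at h1
  rw [zero_sub, neg_eq_iff_eq_neg] at h1
  rw [h1]
  push_cast
  module

/-- The forms of degree `n` and weight `0` annihilated by `E`. -/
noncomputable def hwSpace (k : Type*) [Field k] (n : ℕ) : Submodule k (MvPolynomial (Fin 7) k) :=
  wtSpace k n 0 ⊓ LinearMap.ker (derE (k := k)).toLinearMap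

instance (n : ℕ) : FiniteDimensional k (hwSpace k n) :=
  by unfold hwSpace; infer_instance

/-- `F` maps the weight space `-1` injectively to a complement of the kernel of `E` in the weight
space `0`. -/
lemma finrank_hwSpace [CharZero k] (n : ℕ) :
    Module.finrank k (hwSpace k n) + (expos n (-1)).card ≤ (expos n 0).card := by
  obtain ⟨f, hf⟩ : ∃ f : wtSpace k n (-1) →ₗ[k] MvPolynomial (Fin 7) k,
      ∀ x : wtSpace k n (-1), f x = derF (x : MvPolynomial (Fin 7) k) :=
    ⟨(derF (k := k)).toLinearMap.domRestrict _, fun _ => rfl⟩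
  have hinj : Function.Injective f := by
    rw [← LinearMap.ker_eq_bot, LinearMap.ker_eq_bot']
    intro x hx
    rw [hf] at hx
    exact Subtype.ext (eq_zero_of_EF x.2 (by rw [hx, map_zero]))
  have hle : hwSpace k n ⊔ LinearMap.range f ≤ wtSpace k n 0 := by
    refine sup_le inf_le_left ?_
    intro y hy
    obtain ⟨x, rfl⟩ := LinearMap.mem_range.mp hy
    rw [hf]
    have h := derF_mem x.2
    rwa [neg_add_cancel] at h
  have hinf : hwSpace k n ⊓ LinearMap.range f = ⊥ := by
    rw [eq_bot_iff]
    intro y hy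
    obtain ⟨x, rfl⟩ := LinearMap.mem_range.mp hy.2
    have h : derE (f x) = 0 := LinearMap.mem_ker.mp hy.1.2
    rw [hf] at h
    rw [hf, eq_zero_of_EF x.2 h, map_zero]
    exact Submodule.zero_mem _
  have h1 := Submodule.finrank_sup_add_finrank_inf_eq (hwSpace k n) (LinearMap.range f)
  have h2 := Submodule.finrank_mono hle
  rw [hinf, finrank_bot, LinearMap.finrank_range_of_inj hinj, finrank_wtSpace] at h1
  rw [finrank_wtSpace] at h2
  omega

end Commutators

/-! ### Covariants and invariants of the sextic -/

section Covariants

variable {R : Type*} [CommRing R]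

/-- The action of `y ↦ y + t x` on the coefficients of a binary sextic, the binomial factors
being split off. -/
def u6 (t : R) (v : Fin 7 → R) : Fin 7 → R :=
  ![v 0 + 6 * t * v 1 + 15 * t ^ 2 * v 2 + 20 * t ^ 3 * v 3 + 15 * t ^ 4 * v 4 +
      6 * t ^ 5 * v 5 + t ^ 6 * v 6,
    v 1 + 5 * t * v 2 + 10 * t ^ 2 * v 3 + 10 * t ^ 3 * v 4 + 5 * t ^ 4 * v 5 + t ^ 5 * v 6,
    v 2 + 4 * t * v 3 + 6 * t ^ 2 * v 4 + 4 * t ^ 3 * v 5 + t ^ 4 * v 6,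
    v 3 + 3 * t * v 4 + 3 * t ^ 2 * v 5 + t ^ 3 * v 6,
    v 4 + 2 * t * v 5 + t ^ 2 * v 6,
    v 5 + t * v 6,
    v 6]

/-- The action of `x ↦ x + t y` on the coefficients of a binary sextic, the binomial factors
being split off. -/
def l6 (t : R) (v : Fin 7 → R) : Fin 7 → R :=
  ![v 0,
    v 1 + t * v 0,
    v 2 + 2 * t * v 1 + t ^ 2 * v 0,
    v 3 + 3 * t * v 2 + 3 * t ^ 2 * v 1 + t ^ 3 * v 0,
    v 4 + 4 * t * v 3 + 6 * t ^ 2 * v 2 + 4 * t ^ 3 * v 1 + t ^ 4 * v 0,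
    v 5 + 5 * t * v 4 + 10 * t ^ 2 * v 3 + 10 * t ^ 3 * v 2 + 5 * t ^ 4 * v 1 + t ^ 5 * v 0,
    v 6 + 6 * t * v 5 + 15 * t ^ 2 * v 4 + 20 * t ^ 3 * v 3 + 15 * t ^ 4 * v 2 +
      6 * t ^ 5 * v 1 + t ^ 6 * v 0]

/-- The action of `y ↦ y + t x` on the coefficients of a binary quartic, the binomial factors
being split off. -/
def u4 (t : R) (v : Fin 5 → R) : Fin 5 → R :=
  ![v 0 + 4 * t * v 1 + 6 * t ^ 2 * v 2 + 4 * t ^ 3 * v 3 + t ^ 4 * v 4,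
    v 1 + 3 * t * v 2 + 3 * t ^ 2 * v 3 + t ^ 3 * v 4,
    v 2 + 2 * t * v 3 + t ^ 2 * v 4,
    v 3 + t * v 4,
    v 4]

/-- The action of `x ↦ x + t y` on the coefficients of a binary quartic, the binomial factors
being split off. -/
def l4 (t : R) (v : Fin 5 → R) : Fin 5 → R :=
  ![v 0,
    v 1 + t * v 0,
    v 2 + 2 * t * v 1 + t ^ 2 * v 0,
    v 3 + 3 * t * v 2 + 3 * t ^ 2 * v 1 + t ^ 3 * v 0,
    v 4 + 4 * t * v 3 + 6 * t ^ 2 * v 2 + 4 * t ^ 3 * v 1 + t ^ 4 * v 0]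

/-- The action of `y ↦ y + t x` on the coefficients of a binary quadratic, the binomial factors
being split off. -/
def u2 (t : R) (v : Fin 3 → R) : Fin 3 → R :=
  ![v 0 + 2 * t * v 1 + t ^ 2 * v 2,
    v 1 + t * v 2,
    v 2]

/-- The action of `x ↦ x + t y` on the coefficients of a binary quadratic, the binomial factors
being split off. -/
def l2 (t : R) (v : Fin 3 → R) : Fin 3 → R :=
  ![v 0,
    v 1 + t * v 0,
    v 2 + 2 * t * v 1 + t ^ 2 * v 0]

/-- The coefficients, the binomial factors being split off, of the quartic covariant of the sextic
with coefficients `v = (a, …, g)`; it is proportional to the transvectant `(F, F)₄`, scaled to have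
leading coefficient `6 (a e - 4 b d + 3 c²)` so as to avoid denominators. -/
def covQ (v : Fin 7 → R) : Fin 5 → R :=
  ![6 * (v 0 * v 4 - 4 * v 1 * v 3 + 3 * v 2 ^ 2),
    3 * (v 0 * v 5 - 3 * v 1 * v 4 + 2 * v 2 * v 3),
    v 0 * v 6 - 9 * v 2 * v 4 + 8 * v 3 ^ 2,
    3 * (v 1 * v 6 - 3 * v 2 * v 5 + 2 * v 3 * v 4),
    6 * (v 2 * v 6 - 4 * v 3 * v 5 + 3 * v 4 ^ 2)]

/-- The fourth transvectant, a quadratic form, of a sextic `v` and a quartic `q`. -/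
def covL (v : Fin 7 → R) (q : Fin 5 → R) : Fin 3 → R :=
  ![v 0 * q 4 - 4 * v 1 * q 3 + 6 * v 2 * q 2 - 4 * v 3 * q 1 + v 4 * q 0,
    v 1 * q 4 - 4 * v 2 * q 3 + 6 * v 3 * q 2 - 4 * v 4 * q 1 + v 5 * q 0,
    v 2 * q 4 - 4 * v 3 * q 3 + 6 * v 4 * q 2 - 4 * v 5 * q 1 + v 6 * q 0]

/-- The second transvectant, a quadratic form, of a quartic `q` and a quadratic `l`. -/
def covM (q : Fin 5 → R) (l : Fin 3 → R) : Fin 3 → R :=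
  ![q 0 * l 2 - 2 * q 1 * l 1 + q 2 * l 0,
    q 1 * l 2 - 2 * q 2 * l 1 + q 3 * l 0,
    q 2 * l 2 - 2 * q 3 * l 1 + q 4 * l 0]

/-- The quadratic invariant of a sextic. -/
def invA (v : Fin 7 → R) : R := v 0 * v 6 - 6 * v 1 * v 5 + 15 * v 2 * v 4 - 10 * v 3 ^ 2

/-- The quadratic invariant of a quartic. -/
def invI (q : Fin 5 → R) : R := q 0 * q 4 - 4 * q 1 * q 3 + 3 * q 2 ^ 2

/-- The cubic invariant of a quartic. -/
def invJ (q : Fin 5 → R) : R :=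
  q 0 * q 2 * q 4 + 2 * q 1 * q 2 * q 3 - q 2 ^ 3 - q 0 * q 3 ^ 2 - q 1 ^ 2 * q 4

/-- The discriminant, up to sign, of a quadratic form with middle coefficient `2 m₁`. -/
def invDisc (m : Fin 3 → R) : R := m 0 * m 2 - m 1 ^ 2

/-- The invariants of degrees `2, 4, 6, 10` of a sextic: its quadratic invariant, the quadratic and
cubic invariants of its quartic covariant, and the discriminant of a quadratic covariant of
degree five. -/
def sexticInv (v : Fin 7 → R) : Fin 4 → R :=
  ![invA v, invI (covQ v), invJ (covQ v), invDisc (covM (covQ v) (covL v (covQ v)))]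

lemma covQ_u (t : R) (v : Fin 7 → R) : covQ (u6 t v) = u4 t (covQ v) := by
  ext i; fin_cases i <;> simp [covQ, u6, u4] <;> ring

lemma covQ_l (t : R) (v : Fin 7 → R) : covQ (l6 t v) = l4 t (covQ v) := by
  ext i; fin_cases i <;> simp [covQ, l6, l4] <;> ring

lemma covL_u (t : R) (v : Fin 7 → R) (q : Fin 5 → R) :
    covL (u6 t v) (u4 t q) = u2 t (covL v q) := by
  ext i; fin_cases i <;> simp [covL, u6, u4, u2] <;> ring

lemma covL_l (t : R) (v : Fin 7 → R) (q : Fin 5 → R) :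
    covL (l6 t v) (l4 t q) = l2 t (covL v q) := by
  ext i; fin_cases i <;> simp [covL, l6, l4, l2] <;> ring

lemma covM_u (t : R) (q : Fin 5 → R) (l : Fin 3 → R) :
    covM (u4 t q) (u2 t l) = u2 t (covM q l) := by
  ext i; fin_cases i <;> simp [covM, u4, u2] <;> ring

lemma covM_l (t : R) (q : Fin 5 → R) (l : Fin 3 → R) :
    covM (l4 t q) (l2 t l) = l2 t (covM q l) := by
  ext i; fin_cases i <;> simp [covM, l4, l2] <;> ring

lemma sexticInv_u (t : R) (v : Fin 7 → R) : sexticInv (u6 t v) = sexticInv v := by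
  have h1 : invA (u6 t v) = invA v := by simp [invA, u6]; ring
  have h2 (q : Fin 5 → R) : invI (u4 t q) = invI q := by simp [invI, u4]; ring
  have h3 (q : Fin 5 → R) : invJ (u4 t q) = invJ q := by simp [invJ, u4]; ring
  have h4 (m : Fin 3 → R) : invDisc (u2 t m) = invDisc m := by simp [invDisc, u2]; ring
  simp only [sexticInv, covQ_u, covL_u, covM_u, h1, h2, h3, h4]

lemma sexticInv_l (t : R) (v : Fin 7 → R) : sexticInv (l6 t v) = sexticInv v := by
  have h1 : invA (l6 t v) = invA v := by simp [invA, l6]; ring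
  have h2 (q : Fin 5 → R) : invI (l4 t q) = invI q := by simp [invI, l4]; ring
  have h3 (q : Fin 5 → R) : invJ (l4 t q) = invJ q := by simp [invJ, l4]; ring
  have h4 (m : Fin 3 → R) : invDisc (l2 t m) = invDisc m := by simp [invDisc, l2]; ring
  simp only [sexticInv, covQ_l, covL_l, covM_l, h1, h2, h3, h4]

lemma map_sexticInv {S : Type*} [CommRing S] (f : R →+* S) (v : Fin 7 → R) (i : Fin 4) :
    f (sexticInv v i) = sexticInv (fun j => f (v j)) i := by
  fin_cases i <;> simp [sexticInv, invA, invI, invJ, invDisc, covM, covL, covQ, map_ofNat]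

end Covariants

section Group

lemma sextic_injective {k : Type*} [Field k] [CharZero k] {v w : Fin 7 → k}
    (h : sextic v = sextic w) : v = w := by
  have h' := congrArg (aeval (![Polynomial.X, 1] : Fin 2 → Polynomial k)) h
  simp only [sextic, map_add, map_mul, map_pow, aeval_X, algHom_C, Polynomial.algebraMap_eq,
    Matrix.cons_val_zero, Matrix.cons_val_one, one_pow, mul_one,
    mul_assoc] at h'
  have hc (n : ℕ) := congrArg (fun p => Polynomial.coeff p n) h'
  have h0 := hc 0
  have h1 := hc 1
  have h2 := hc 2
  have h3 := hc 3
  have h4 := hc 4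
  have h5 := hc 5
  have h6 := hc 6
  simp [Polynomial.coeff_X, Polynomial.coeff_C, -map_mul] at h0 h1 h2 h3 h4 h5 h6
  ext i
  fin_cases i <;> assumption

lemma substAct_mul {R : Type*} [CommRing R] (M N : Matrix (Fin 2) (Fin 2) R)
    (F : MvPolynomial (Fin 2) R) : substAct M (substAct N F) = substAct (M * N) F := by
  have h : (aeval fun i => C (M 0 i) * X 0 + C (M 1 i) * X 1).comp
      (aeval fun i => C (N 0 i) * X 0 + C (N 1 i) * X 1) =
      (aeval fun i => C ((M * N) 0 i) * X 0 + C ((M * N) 1 i) * X 1 :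
        MvPolynomial (Fin 2) R →ₐ[R] MvPolynomial (Fin 2) R) := by
    refine algHom_ext fun i => ?_
    simp [Matrix.mul_apply, algHom_C, algebraMap_eq]
    ring
  exact DFunLike.congr_fun h F

lemma sextic_u {R : Type*} [CommRing R] (t : R) (v : Fin 7 → R) :
    sextic (u6 t v) = substAct !![1, t; 0, 1] (sextic v) := by
  simp [sextic, substAct, u6, algHom_C, algebraMap_eq, map_ofNat]
  ring

lemma sextic_l {R : Type*} [CommRing R] (t : R) (v : Fin 7 → R) :
    sextic (l6 t v) = substAct !![1, 0; t, 1] (sextic v) := by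
  simp [sextic, substAct, l6, algHom_C, algebraMap_eq, map_ofNat]
  ring

/-- Unipotent matrices generate `SL₂`: if the lower left entry is nonzero, three of them suffice,
and it can be made nonzero by multiplication with a unipotent matrix. -/
lemma exists_decomp {k : Type*} [Field k] (M : Matrix (Fin 2) (Fin 2) k) (hM : M.det = 1) :
    ∃ p q r s : k, M = !![1, p; 0, 1] * (!![1, 0; q, 1] * (!![1, r; 0, 1] * !![1, 0; s, 1])) := by
  have key (N : Matrix (Fin 2) (Fin 2) k) (hN : N.det = 1) (hc : N 1 0 ≠ 0) :
      ∃ p q r : k, N = !![1, p; 0, 1] * (!![1, 0; q, 1] * !![1, r; 0, 1]) := by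
    refine ⟨(N 0 0 - 1) / N 1 0, N 1 0, (N 1 1 - 1) / N 1 0, ?_⟩
    rw [Matrix.det_fin_two] at hN
    ext i j
    fin_cases i <;> fin_cases j <;> simp [Matrix.mul_apply] <;> field_simp <;>
      first | ring1 | linear_combination hN | linear_combination -hN
  by_cases hc : M 1 0 = 0
  · have hd : M 1 1 ≠ 0 := by
      rw [Matrix.det_fin_two, hc] at hM
      rintro h; simp [h] at hM
    set L : Matrix (Fin 2) (Fin 2) k := !![1, 0; 1, 1] with hL
    have hLL : L * !![1, 0; -1, 1] = 1 := by
      simp [hL, Matrix.one_fin_two]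
    obtain ⟨p, q, r, h⟩ := key (M * L) (by rw [Matrix.det_mul, hM]; simp [hL, Matrix.det_fin_two])
      (by simpa [hL, Matrix.mul_apply, hc] using hd)
    refine ⟨p, q, r, -1, ?_⟩
    have hM' : M = M * L * !![1, 0; -1, 1] := by rw [mul_assoc, hLL, mul_one]
    rw [hM', h, mul_assoc, mul_assoc]
  · obtain ⟨p, q, r, h⟩ := key M hM hc
    exact ⟨p, q, r, 0, by rw [← Matrix.one_fin_two, mul_one]; exact h⟩

/-- A polynomial function fixed by both unipotent one-parameter groups is invariant. -/
lemma isSL2Invariant_of_unipotent {k : Type*} [Field k] [CharZero k] {P : MvPolynomial (Fin 7) k}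
    (hu : ∀ t v, eval (u6 t v) P = eval v P) (hl : ∀ t v, eval (l6 t v) P = eval v P) :
    IsSL2Invariant P := by
  intro M hM v w h
  obtain ⟨p, q, r, s, rfl⟩ := exists_decomp M hM
  rw [← substAct_mul, ← substAct_mul, ← substAct_mul, ← sextic_l, ← sextic_u, ← sextic_l,
    ← sextic_u] at h
  rw [sextic_injective h, hu, hl, hu, hl]

lemma IsSL2Invariant.eval_u {k : Type*} [CommRing k] {P : MvPolynomial (Fin 7) k}
    (h : IsSL2Invariant P) (t : k) (v : Fin 7 → k) : eval (u6 t v) P = eval v P :=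
  h _ (by simp [Matrix.det_fin_two]) _ _ (sextic_u t v)

lemma IsSL2Invariant.eval_l {k : Type*} [CommRing k] {P : MvPolynomial (Fin 7) k}
    (h : IsSL2Invariant P) (t : k) (v : Fin 7 → k) : eval (l6 t v) P = eval v P :=
  h _ (by simp [Matrix.det_fin_two]) _ _ (sextic_l t v)

end Group

/-! ### Degrees and algebraic independence -/

section Homogeneity

variable {k : Type*} [Field k]

lemma degDer_sexticInv (i : Fin 4) :
    degDer (k := k) (sexticInv X i) =
      ((![2, 4, 6, 10] : Fin 4 → ℕ) i : MvPolynomial (Fin 7) k) * sexticInv X i := by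
  have hX (i : Fin 7) : degDer (k := k) (X i) = X i := by
    simp [degDer, diagDer, mkDerivation_X]
  have hA : degDer (k := k) (invA X) = 2 * invA X := by
    simp [invA, Derivation.leibniz, Derivation.leibniz_pow, der_ofNat, hX]; ring
  have hQ (i : Fin 5) : degDer (k := k) (covQ X i) = 2 * covQ X i := by
    fin_cases i <;> simp [covQ, Derivation.leibniz, Derivation.leibniz_pow, der_ofNat, hX] <;> ring
  unfold sexticInv
  generalize covQ (X : Fin 7 → MvPolynomial (Fin 7) k) = q at hQ ⊢
  have hI : degDer (k := k) (invI q) = 4 * invI q := by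
    simp [invI, Derivation.leibniz, Derivation.leibniz_pow, der_ofNat, hQ]; ring
  have hJ : degDer (k := k) (invJ q) = 6 * invJ q := by
    simp [invJ, Derivation.leibniz, Derivation.leibniz_pow, der_ofNat, hQ]; ring
  have hL (i : Fin 3) : degDer (k := k) (covL X q i) = 3 * covL X q i := by
    fin_cases i <;> simp [covL, Derivation.leibniz, der_ofNat, hX, hQ] <;> ring
  generalize covL X q = l at hL ⊢
  have hM (i : Fin 3) : degDer (k := k) (covM q l i) = 5 * covM q l i := by
    fin_cases i <;> simp [covM, Derivation.leibniz, der_ofNat, hL, hQ] <;> ring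
  generalize covM q l = m at hM ⊢
  have hD : degDer (k := k) (invDisc m) = 10 * invDisc m := by
    simp [invDisc, Derivation.leibniz, Derivation.leibniz_pow, hM]; ring
  fin_cases i
  · simpa using hA
  · simpa using hI
  · simpa using hJ
  · simpa using hD

lemma isHomogeneous_sexticInv [CharZero k] (i : Fin 4) :
    (sexticInv (X : Fin 7 → MvPolynomial (Fin 7) k) i).IsHomogeneous
      ((![2, 4, 6, 10] : Fin 4 → ℕ) i) := by
  rw [← degDer_eq_smul_iff, degDer_sexticInv, smul_eq_C_mul, map_natCast]

end Homogeneity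

section Jacobian

variable {k : Type*} [Field k]

/-- The chain rule for a derivation. -/
lemma der_aeval (f : Fin 4 → MvPolynomial (Fin 7) k)
    (D : Derivation k (MvPolynomial (Fin 7) k) (MvPolynomial (Fin 7) k))
    (Q : MvPolynomial (Fin 4) k) :
    D (aeval f Q) = ∑ j, D (f j) * aeval f (pderiv j Q) := by
  induction Q using MvPolynomial.induction_on with
  | C a => simp [algHom_C]
  | add P Q hP hQ => simp only [map_add, hP, hQ, mul_add, Finset.sum_add_distrib]
  | mul_X P i hP =>
    simp only [map_mul, Derivation.leibniz, hP, aeval_X, smul_eq_mul, pderiv_X, map_add, mul_add,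
      Finset.sum_add_distrib, Finset.mul_sum]
    have h : ∑ x, D (f x) *
        (aeval f P * aeval f ((Pi.single x 1 : Fin 4 → MvPolynomial (Fin 4) k) i)) =
        aeval f P * D (f i) := by
      rw [Finset.sum_eq_single i]
      · rw [Pi.single_eq_same, map_one, mul_one, mul_comm]
      · intro j _ hj
        rw [Pi.single_eq_of_ne' hj, map_zero, mul_zero, mul_zero]
      · simp
    rw [h, add_right_inj]
    exact Finset.sum_congr rfl fun j _ => mul_left_comm _ _ _

/-- The Jacobian criterion: a polynomial relation of least degree would, after differentiation,
give relations of smaller degree. -/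
lemma algebraicIndependent_of_jacobian [CharZero k] (f : Fin 4 → MvPolynomial (Fin 7) k)
    (D : Fin 4 → Derivation k (MvPolynomial (Fin 7) k) (MvPolynomial (Fin 7) k))
    (p : Fin 7 → k) (hdet : (Matrix.of fun i j => eval p (D i (f j))).det ≠ 0) :
    AlgebraicIndependent k f := by
  have hdet' : (Matrix.of fun i j => D i (f j)).det ≠ 0 := by
    intro h
    apply hdet
    have := congrArg (eval p) h
    rwa [RingHom.map_det, map_zero] at this
  have key (N : ℕ) : ∀ Q : MvPolynomial (Fin 4) k, (∀ d, coeff d Q ≠ 0 → d.degree < N) →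
      aeval f Q = 0 → Q = 0 := by
    induction N with
    | zero =>
      intro Q hQ _
      ext d
      by_contra h
      exact absurd (hQ d h) (Nat.not_lt_zero _)
    | succ N ih =>
      intro Q hQ h
      have hx : (fun j => aeval f (pderiv j Q)) = 0 := by
        refine Matrix.eq_zero_of_mulVec_eq_zero hdet' ?_
        ext1 i
        rw [Pi.zero_apply, ← map_zero (D i), ← h, der_aeval]
        rfl
      have hder (j : Fin 4) : pderiv j Q = 0 := by
        refine ih _ (fun d hd => ?_) (congrFun hx j)
        rw [coeff_pderiv] at hd
        have := hQ _ (left_ne_zero_of_mul hd)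
        rw [map_add, Finsupp.degree_single] at this
        omega
      have hC : Q = C (coeff 0 Q) := by
        ext m
        rw [coeff_C]
        split_ifs with hm
        · rw [hm]
        · obtain ⟨j, hj⟩ : ∃ j, m j ≠ 0 := by
            by_contra! hall
            exact hm (Finsupp.ext fun j => (hall j).symm)
          have h0 := coeff_pderiv (i := j) Q (m - Finsupp.single j 1)
          rw [tsub_add_cancel_of_le (Finsupp.single_le_iff.mpr (Nat.pos_of_ne_zero hj)), hder,
            coeff_zero, eq_comm, mul_eq_zero] at h0
          exact h0.resolve_right (Nat.cast_add_one_ne_zero _)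
      rw [hC, algHom_C, algebraMap_eq, C_eq_zero] at h
      rw [hC, h, C_0]
  rw [algebraicIndependent_iff]
  intro Q hQ
  refine key (Q.totalDegree + 1) Q (fun d hd => ?_) hQ
  have := le_totalDegree (mem_support_iff.mpr hd)
  rw [Finsupp.degree_apply]
  exact Nat.lt_succ_of_le this

/-- The derivatives of the invariants at the sextic `x⁶ + 6 x y⁵`. -/
lemma eval_der_sexticInv (D : Derivation k (MvPolynomial (Fin 7) k) (MvPolynomial (Fin 7) k))
    (x : Fin 7 → k) (hx : ∀ i, eval ![1, 0, 0, 0, 0, 1, 0] (D (X i)) = x i) (j : Fin 4) :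
    eval ![1, 0, 0, 0, 0, 1, 0] (D (sexticInv X j)) =
      (![x 6 - 6 * x 1, 108 * x 2, 216 * x 3, -5184 * x 0 - 7776 * x 5] : Fin 4 → k) j := by
  have hA : eval ![1, 0, 0, 0, 0, 1, 0] (D (invA X)) = x 6 - 6 * x 1 := by
    simp [invA, Derivation.leibniz, Derivation.leibniz_pow, der_ofNat, hx]
  have hQ (i : Fin 5) : eval ![1, 0, 0, 0, 0, 1, 0] (covQ X i) = (![0, 3, 0, 0, 0] : _ → k) i := by
    fin_cases i <;> simp [covQ]
  have hQ' (i : Fin 5) : eval ![1, 0, 0, 0, 0, 1, 0] (D (covQ X i)) =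
      (![6 * x 4, 3 * (x 5 + x 0), x 6, -9 * x 2, -24 * x 3] : _ → k) i := by
    fin_cases i <;> simp [covQ, Derivation.leibniz, Derivation.leibniz_pow, der_ofNat, hx] <;> ring
  unfold sexticInv
  generalize covQ (X : Fin 7 → MvPolynomial (Fin 7) k) = q at hQ hQ' ⊢
  have hI : eval ![1, 0, 0, 0, 0, 1, 0] (D (invI q)) = 108 * x 2 := by
    simp [invI, Derivation.leibniz, Derivation.leibniz_pow, der_ofNat, hQ, hQ']; ring
  have hJ : eval ![1, 0, 0, 0, 0, 1, 0] (D (invJ q)) = 216 * x 3 := by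
    simp [invJ, Derivation.leibniz, Derivation.leibniz_pow, der_ofNat, hQ, hQ']; ring
  have hL (i : Fin 3) : eval ![1, 0, 0, 0, 0, 1, 0] (covL X q i) = (![0, 0, -12] : _ → k) i := by
    fin_cases i <;> simp [covL, hQ]; norm_num
  have hL' (i : Fin 3) : eval ![1, 0, 0, 0, 0, 1, 0] (D (covL X q i)) =
      (![-36 * x 3, -6 * x 4, -24 * x 5 - 12 * x 0] : _ → k) i := by
    fin_cases i <;> simp [covL, Derivation.leibniz, der_ofNat, hx, hQ, hQ'] <;> ring
  generalize covL X q = l at hL hL' ⊢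
  have hM (i : Fin 3) : eval ![1, 0, 0, 0, 0, 1, 0] (covM q l i) = (![0, -36, 0] : _ → k) i := by
    fin_cases i <;> simp [covM, hQ, hL]; norm_num
  have hM' (i : Fin 3) : eval ![1, 0, 0, 0, 0, 1, 0] (D (covM q l i)) =
      (![-36 * x 4, -108 * x 5 - 72 * x 0, -12 * x 6] : _ → k) i := by
    fin_cases i <;> simp [covM, Derivation.leibniz, der_ofNat, hQ, hQ', hL, hL'] <;> ring
  generalize covM q l = m at hM hM' ⊢
  have hD : eval ![1, 0, 0, 0, 0, 1, 0] (D (invDisc m)) = -5184 * x 0 - 7776 * x 5 := by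
    simp [invDisc, Derivation.leibniz, Derivation.leibniz_pow, hM, hM']; ring
  fin_cases j
  · exact hA
  · exact hI
  · exact hJ
  · exact hD

lemma algebraicIndependent_sexticInv [CharZero k] :
    AlgebraicIndependent k (sexticInv (X : Fin 7 → MvPolynomial (Fin 7) k)) := by
  refine algebraicIndependent_of_jacobian _ (fun i => pderiv (![1, 2, 3, 0] i))
    ![1, 0, 0, 0, 0, 1, 0] ?_
  have h : (Matrix.of fun i j => eval (![1, 0, 0, 0, 0, 1, 0] : Fin 7 → k)
      (pderiv (![1, 2, 3, 0] i) (sexticInv X j))) = Matrix.diagonal ![-6, 108, 216, -5184] := by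
    ext i j
    rw [Matrix.of_apply,
      eval_der_sexticInv _ (fun l => if l = ![1, 2, 3, 0] i then 1 else 0) fun l => ?_]
    · fin_cases i <;> fin_cases j <;> simp
    · rw [pderiv_X, Pi.single_apply]
      split_ifs <;> simp_all
  rw [h, Matrix.det_diagonal, Fin.prod_univ_four]
  simp

end Jacobian

/-! ### Invariants are killed by the Lie algebra -/

section Infinitesimal

variable {k : Type*} [Field k]

/-- The chain rule for a polynomial evaluated along a curve whose velocity at `0` is given by the
derivation `D`. -/
lemma eval_derivative_aeval (D : Derivation k (MvPolynomial (Fin 7) k) (MvPolynomial (Fin 7) k))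
    (v : Fin 7 → k) (f : Fin 7 → Polynomial k) (h0 : ∀ i, (f i).eval 0 = v i)
    (h1 : ∀ i, (Polynomial.derivative (f i)).eval 0 = eval v (D (X i)))
    (P : MvPolynomial (Fin 7) k) :
    (aeval f P).eval 0 = eval v P ∧
      (Polynomial.derivative (aeval f P)).eval 0 = eval v (D P) := by
  induction P using MvPolynomial.induction_on with
  | C a => simp [algHom_C]
  | add P Q hP hQ => simp [hP.1, hP.2, hQ.1, hQ.2]
  | mul_X P i hP => simp [hP.1, hP.2, h0, h1, Derivation.leibniz]; ring

lemma polynomial_eval_aeval (f : Fin 7 → Polynomial k) (t : k) (P : MvPolynomial (Fin 7) k) :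
    (aeval f P).eval t = eval (fun i => (f i).eval t) P := by
  induction P using MvPolynomial.induction_on with
  | C a => simp [algHom_C]
  | add P Q hP hQ => simp [hP, hQ]
  | mul_X P i hP => simp [hP]

/-- A polynomial that is constant along curves through every point with initial velocity `D` is
killed by `D`. -/
lemma der_eq_zero_of_curve [CharZero k]
    (D : Derivation k (MvPolynomial (Fin 7) k) (MvPolynomial (Fin 7) k))
    (f : (Fin 7 → k) → Fin 7 → Polynomial k) (h0 : ∀ v i, (f v i).eval 0 = v i)
    (h1 : ∀ v i, (Polynomial.derivative (f v i)).eval 0 = eval v (D (X i)))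
    (P : MvPolynomial (Fin 7) k) (h : ∀ v t, eval (fun i => (f v i).eval t) P = eval v P) :
    D P = 0 := by
  refine MvPolynomial.funext fun v => ?_
  rw [← (eval_derivative_aeval D v (f v) (h0 v) (h1 v) P).2]
  have hconst : aeval (f v) P = Polynomial.C (eval v P) := by
    refine Polynomial.funext fun t => ?_
    rw [Polynomial.eval_C, ← h v t, polynomial_eval_aeval]
  simp [hconst]

lemma IsSL2Invariant.derE_eq_zero [CharZero k] {P : MvPolynomial (Fin 7) k}
    (h : IsSL2Invariant P) : derE P = 0 := by
  refine der_eq_zero_of_curve derE (fun v => u6 Polynomial.X fun i => Polynomial.C (v i))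
    (fun v i => ?_) (fun v i => ?_) P fun v t => ?_
  · fin_cases i <;> simp [u6]
  · fin_cases i <;> simp [u6, derE, mkDerivation_X]
  · rw [← h.eval_u t v]
    congr 2
    ext i
    fin_cases i <;> simp [u6] <;> ring

lemma IsSL2Invariant.derF_eq_zero [CharZero k] {P : MvPolynomial (Fin 7) k}
    (h : IsSL2Invariant P) : derF P = 0 := by
  refine der_eq_zero_of_curve derF (fun v => l6 Polynomial.X fun i => Polynomial.C (v i))
    (fun v i => ?_) (fun v i => ?_) P fun v t => ?_
  · fin_cases i <;> simp [l6]
  · fin_cases i <;> simp [l6, derF, mkDerivation_X]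
  · rw [← h.eval_l t v]
    congr 2
    ext i
    fin_cases i <;> simp [l6] <;> ring

/-- Homogeneous invariants are killed by `E` and `F`, hence by their commutator, so they have
weight `0`. -/
lemma IsSL2Invariant.mem_hwSpace [CharZero k] {P : MvPolynomial (Fin 7) k} {n : ℕ}
    (h : IsSL2Invariant P) (hn : P.IsHomogeneous n) : P ∈ hwSpace k n := by
  refine ⟨mem_wtSpace.mpr ⟨(degDer_eq_smul_iff n P).mpr hn, ?_⟩,
    LinearMap.mem_ker.mpr h.derE_eq_zero⟩
  have h1 := DFunLike.congr_fun (comm_EF (k := k)) P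
  rw [Derivation.commutator_apply, h.derE_eq_zero, h.derF_eq_zero, map_zero, map_zero, sub_zero,
    Derivation.smul_apply, eq_comm, smul_eq_zero] at h1
  rw [h1.resolve_left (by simp), Int.cast_zero, zero_smul]

end Infinitesimal

/-! ### The dimension count -/

section Conclusion

lemma eval_sexticInv {k : Type*} [Field k] (v : Fin 7 → k) (i : Fin 4) :
    eval v (sexticInv X i) = sexticInv v i := by
  rw [map_sexticInv]; simp

variable {k : Type*} [Field k] [CharZero k]

lemma isSL2Invariant_sexticInv (i : Fin 4) :
    IsSL2Invariant (sexticInv (X : Fin 7 → MvPolynomial (Fin 7) k) i) :=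
  isSL2Invariant_of_unipotent (fun t v => by simp only [eval_sexticInv, sexticInv_u])
    fun t v => by simp only [eval_sexticInv, sexticInv_l]

/-- The monomial in the four invariants indexed by `l ∈ invExpos n`; `l i` is the degree
contributed by the `i`-th invariant. -/
noncomputable def invMonomial (k : Type*) [Field k] (l : Fin 4 →₀ ℕ) : MvPolynomial (Fin 7) k :=
  ∏ i, sexticInv X i ^ (l i / (![2, 4, 6, 10] : Fin 4 → ℕ) i)

lemma invMonomial_mem_hwSpace {n : ℕ} {l : Fin 4 →₀ ℕ} (hl : l ∈ invExpos n) :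
    invMonomial k l ∈ hwSpace k n := by
  simp only [invExpos, Finset.mem_filter, Finset.mem_finsuppAntidiag] at hl
  obtain ⟨⟨hn, -⟩, hd⟩ := hl
  refine IsSL2Invariant.mem_hwSpace (fun M hM v w h => ?_) ?_
  · simp only [invMonomial, map_prod, map_pow]
    exact Finset.prod_congr rfl fun i _ => by rw [isSL2Invariant_sexticInv i M hM v w h]
  · rw [← hn]
    refine IsHomogeneous.prod _ _ _ fun i _ => ?_
    have := (isHomogeneous_sexticInv (k := k) i).pow (l i / (![2, 4, 6, 10] : Fin 4 → ℕ) i)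
    rwa [Nat.mul_div_cancel' (hd i)] at this

lemma linearIndependent_invMonomial (n : ℕ) :
    LinearIndependent k fun l : invExpos n => invMonomial k l := by
  have hinj : Function.Injective
      (aeval (R := k) (sexticInv (X : Fin 7 → MvPolynomial (Fin 7) k))) :=
    algebraicIndependent_sexticInv
  let e (l : invExpos n) : Fin 4 →₀ ℕ :=
    Finsupp.equivFunOnFinite.symm fun i => l.1 i / (![2, 4, 6, 10] : Fin 4 → ℕ) i
  have he : Function.Injective e := by
    intro l m h
    refine Subtype.ext (Finsupp.ext fun i => ?_)
    have hl := (Finset.mem_filter.mp l.2).2 i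
    have hm := (Finset.mem_filter.mp m.2).2 i
    have hi := DFunLike.congr_fun h i
    change l.1 i / _ = m.1 i / _ at hi
    rw [← Nat.mul_div_cancel' hl, hi, Nat.mul_div_cancel' hm]
  have h := ((basisMonomials (Fin 4) k).linearIndependent.comp e he).map'
    (aeval (R := k) (sexticInv (X : Fin 7 → MvPolynomial (Fin 7) k))).toLinearMap
    (LinearMap.ker_eq_bot.mpr hinj)
  have heq : (fun l : invExpos n => invMonomial k l) =
      ⇑(aeval (R := k) (sexticInv (X : Fin 7 → MvPolynomial (Fin 7) k))).toLinearMap ∘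
        ⇑(basisMonomials (Fin 4) k) ∘ e := by
    ext1 l
    simp only [Function.comp_apply, coe_basisMonomials, AlgHom.toLinearMap_apply]
    rw [aeval_monomial, map_one, one_mul, Finsupp.prod_fintype _ _ fun i => pow_zero _]
    rfl
  rw [heq]
  exact h

/-- By the dimension count, the monomials in the four invariants span the highest weight vectors
of weight `0`. -/
lemma hwSpace_le_span {n : ℕ} (hn : Even n) :
    hwSpace k n ≤ Submodule.span k (Set.range fun l : invExpos n => invMonomial k l) := by
  have hle : Submodule.span k (Set.range fun l : invExpos n => invMonomial k l) ≤ hwSpace k n := by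
    rw [Submodule.span_le]
    rintro _ ⟨l, rfl⟩
    exact invMonomial_mem_hwSpace l.2
  refine (Submodule.eq_of_le_of_finrank_le hle ?_).ge
  rw [finrank_span_eq_card (linearIndependent_invMonomial n), Fintype.card_coe]
  have h1 := finrank_hwSpace (k := k) n
  have h2 := card_expos n hn
  omega

end Conclusion

/-- There are homogeneous SL₂-invariants `A, B, C, D` of degrees
2, 4, 6, 10, algebraically independent over `k`, such that every homogeneous
SL₂-invariant of even degree lies in `k[A,B,C,D]`. -/
theorem stmt10 {k : Type*} [Field k] [CharZero k] :
    ∃ A B C D : MvPolynomial (Fin 7) k,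
      A.IsHomogeneous 2 ∧ B.IsHomogeneous 4 ∧ C.IsHomogeneous 6 ∧ D.IsHomogeneous 10 ∧
      IsSL2Invariant A ∧ IsSL2Invariant B ∧ IsSL2Invariant C ∧ IsSL2Invariant D ∧
      AlgebraicIndependent k ![A, B, C, D] ∧
      ∀ (P : MvPolynomial (Fin 7) k) (n : ℕ), P.IsHomogeneous n → Even n →
        IsSL2Invariant P →
        P ∈ Algebra.adjoin k ({A, B, C, D} : Set (MvPolynomial (Fin 7) k)) := by
  refine ⟨sexticInv X 0, sexticInv X 1, sexticInv X 2, sexticInv X 3, isHomogeneous_sexticInv 0,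
    isHomogeneous_sexticInv 1, isHomogeneous_sexticInv 2, isHomogeneous_sexticInv 3,
    isSL2Invariant_sexticInv 0, isSL2Invariant_sexticInv 1, isSL2Invariant_sexticInv 2,
    isSL2Invariant_sexticInv 3, ?_, fun P n hP hn hinv => ?_⟩
  · exact algebraicIndependent_sexticInv
  · refine Submodule.span_le (p := Subalgebra.toSubmodule (Algebra.adjoin k _)).mpr ?_
      (hwSpace_le_span hn (hinv.mem_hwSpace hP))
    rintro _ ⟨l, rfl⟩
    refine Subalgebra.prod_mem _ fun i _ => Subalgebra.pow_mem _ (Algebra.subset_adjoin ?_) _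
    fin_cases i <;> simp
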